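/- Let B, C, L > 0 and let (u,v) be an admissible pair for the energy E with u ≥ 0 on [0,1]. Suppose 0 < r₁ < r₂ < 1, v(r₁) = v(r₂) = 0 and v(r) > 0 for r₁ < r < r₂, and define v̄ by v̄ = v on [0,r₁] ∪ [r₂,1] and v̄ = 0 on (r₁, r₂). Then E(u,v) − E(u,v̄) = ∫_{r₁}^{r₂} [ r (v')²/3 + (r/L)·(C v²/9)·(v − B/(3C))² + r (u²/(6L))·(B v + C v²) ] dr, and this quantity is strictly positive. -/

import Mathlib

/-!
The two energy densities agree outside `[r₁, r₂]`, and on `(r₁, r₂)`, where `v̄ = 0`, their difference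
is the density on the right-hand side after completing the square in
`C v⁴/9 - 2 B v³/27 + B² v²/(81 C)`. Since `vbar` may fail to be differentiable at `r₁` and `r₂` this
holds only almost everywhere, which is enough for the integrals.

The analytic content is that the energy density is integrable at all, so that the integral of the
difference is the difference of the integrals. The only terms not covered by admissibility are of
degree three and four in `(u, v)`, and they are dominated once `r w⁴` is known to be integrable for
`w = u, v`. For this, `|w'| ≤ (r w'² + 1/r)/2` gives a logarithmic bound `|w r| ≤ M + |log r|`
(`exists_abs_le_add_log`), and `r (M + |log r|)⁴` is bounded (`integrableOn_mul_pow_four`).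

For strict positivity, the density is nonnegative, and its middle term is positive near `r₁`, where
continuity and `v r₁ = 0` force `0 < v < B/(3C)`.
-/

noncomputable section

open Set

/-- The admissible set `S` of pairs `(u,v)` with `√r u', √r v', u/√r, √r v ∈ L²(0,1)`
and boundary values `u(1) = B/(3C)`, `v(1) = −B/(6C)`. -/
def Sadm (B C : ℝ) : Set ((ℝ → ℝ) × (ℝ → ℝ)) :=
  {p | (∀ r ∈ Set.Ioo (0:ℝ) 1, DifferentiableAt ℝ p.1 r) ∧
       (∀ r ∈ Set.Ioo (0:ℝ) 1, DifferentiableAt ℝ p.2 r) ∧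
       IntervalIntegrable (fun r => r * (deriv p.1 r) ^ 2) MeasureTheory.volume 0 1 ∧
       IntervalIntegrable (fun r => r * (deriv p.2 r) ^ 2) MeasureTheory.volume 0 1 ∧
       IntervalIntegrable (fun r => (p.1 r) ^ 2 / r) MeasureTheory.volume 0 1 ∧
       IntervalIntegrable (fun r => r * (p.2 r) ^ 2) MeasureTheory.volume 0 1 ∧
       p.1 1 = B / (3 * C) ∧ p.2 1 = -(B / (6 * C))}

/-- The Landau–de Gennes energy of the radially symmetric planar `(u,v)`-ansatz. -/
def En (B C L : ℝ) (u v : ℝ → ℝ) : ℝ :=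
  ∫ r in (0:ℝ)..1,
    ((deriv u r) ^ 2 / 4 + (deriv v r) ^ 2 / 3 + (u r) ^ 2 / r ^ 2
      + (B ^ 2 / (54 * C * L)) * ((u r) ^ 2 / 2 + 2 * (v r) ^ 2 / 3)
      + (C / L) * ((u r) ^ 4 / 16 + (u r) ^ 2 * (v r) ^ 2 / 6 + (v r) ^ 4 / 9)
      - (B / (3 * L)) * v r * (2 * (v r) ^ 2 / 9 - (u r) ^ 2 / 2)) * r

open MeasureTheory

/-- The planar radial Sobolev bound: finite Dirichlet energy `∫ r w'²` allows at most logarithmic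
growth at the origin. -/
lemma exists_abs_le_add_log {w : ℝ → ℝ} (hd : ∀ r ∈ Ioo (0:ℝ) 1, DifferentiableAt ℝ w r)
    (hi : IntervalIntegrable (fun r => r * (deriv w r) ^ 2) volume 0 1) :
    ∃ M, 0 ≤ M ∧ ∀ r ∈ Ioo (0:ℝ) 1, |w r| ≤ M + |Real.log r| := by
  set J := |∫ r in (0:ℝ)..1, r * (deriv w r) ^ 2| with hJ
  have hJ0 : 0 ≤ J := abs_nonneg _
  refine ⟨|w (1/2)| + J + |Real.log 2|, by positivity, fun r hr => ?_⟩
  have hsub : uIcc (1/2) r ⊆ Ioo (0:ℝ) 1 := by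
    intro x hx
    rw [mem_uIcc] at hx
    rcases hx with h | h <;> constructor <;> linarith [hr.1, hr.2, h.1, h.2]
  have hsub' : uIoc (1/2) r ⊆ uIoc (0:ℝ) 1 := by
    intro x hx
    have := hsub (uIoc_subset_uIcc hx)
    rw [uIoc_of_le zero_le_one]
    exact ⟨this.1, this.2.le⟩
  have hi1 : IntervalIntegrable (fun r => r * (deriv w r) ^ 2) volume (1/2) r := by
    refine hi.mono_set ?_
    rw [uIcc_of_le (zero_le_one' ℝ)]
    exact hsub.trans Ioo_subset_Icc_self
  have hi2 : IntervalIntegrable (fun r : ℝ => r⁻¹) volume (1/2) r := by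
    refine ContinuousOn.intervalIntegrable ?_
    exact continuousOn_inv₀.mono fun x hx => (hsub hx).1.ne'
  have hi3 := (hi1.add hi2).const_mul (1/2)
  have hle : ∀ x ∈ uIoc (1/2) r,
      ‖deriv w x‖ ≤ 1/2 * (x * (deriv w x) ^ 2 + x⁻¹) := by
    intro x hx
    have hx0 := (hsub (uIoc_subset_uIcc hx)).1
    rw [Real.norm_eq_abs, ← sq_abs (deriv w x)]
    have : 1/2 * (x * |deriv w x| ^ 2 + x⁻¹) - |deriv w x|
        = (x * |deriv w x| - 1) ^ 2 / (2 * x) := by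
      field_simp
      ring
    have h2 : 0 ≤ (x * |deriv w x| - 1) ^ 2 / (2 * x) := by positivity
    linarith
  have hae : ∀ᵐ x ∂volume.restrict (uIoc (1/2) r),
      ‖deriv w x‖ ≤ 1/2 * (x * (deriv w x) ^ 2 + x⁻¹) :=
    (ae_restrict_iff' measurableSet_uIoc).2 (Filter.Eventually.of_forall hle)
  have hdi : IntervalIntegrable (deriv w) volume (1/2) r :=
    hi3.mono_fun' (measurable_deriv w).aestronglyMeasurable hae
  have hftc := intervalIntegral.integral_eq_sub_of_hasDerivAt
    (fun x hx => (hd x (hsub hx)).hasDerivAt) hdi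
  have hb := intervalIntegral.norm_integral_le_abs_of_norm_le hae hi3
  rw [hftc, intervalIntegral.integral_const_mul, intervalIntegral.integral_add hi1 hi2,
    integral_inv_of_pos (by norm_num) hr.1, Real.norm_eq_abs] at hb
  have hmono : |∫ x in (1/2)..r, x * (deriv w x) ^ 2| ≤ J := by
    refine intervalIntegral.abs_integral_mono_interval hsub' ?_ hi
    refine (ae_restrict_iff' measurableSet_uIoc).2 (Filter.Eventually.of_forall fun x hx => ?_)
    rw [uIoc_of_le zero_le_one] at hx
    exact mul_nonneg hx.1.le (sq_nonneg _)
  have hlog : Real.log (r / (1/2)) = Real.log r + Real.log 2 := by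
    rw [Real.log_div hr.1.ne' (by norm_num), one_div, Real.log_inv]
    ring
  rw [hlog, abs_mul, abs_of_pos (by norm_num : (0:ℝ) < 1/2)] at hb
  have h1 := abs_add_le (∫ x in (1/2)..r, x * (deriv w x) ^ 2) (Real.log r + Real.log 2)
  have h2 := abs_add_le (Real.log r) (Real.log 2)
  have h3 := abs_sub_abs_le_abs_sub (w r) (w (1/2))
  have h4 := abs_nonneg (Real.log r)
  have h5 := abs_nonneg (Real.log 2)
  linarith

lemma continuousOn_of_differentiable {w : ℝ → ℝ}
    (hd : ∀ r ∈ Ioo (0:ℝ) 1, DifferentiableAt ℝ w r) : ContinuousOn w (Ioo 0 1) :=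
  fun r hr => (hd r hr).continuousAt.continuousWithinAt

lemma integrableOn_mul_pow_four {w : ℝ → ℝ} (hd : ∀ r ∈ Ioo (0:ℝ) 1, DifferentiableAt ℝ w r)
    (hi : IntervalIntegrable (fun r => r * (deriv w r) ^ 2) volume 0 1) :
    IntegrableOn (fun r => r * (w r) ^ 4) (Ioo 0 1) := by
  obtain ⟨M, hM, hw⟩ := exists_abs_le_add_log hd hi
  have hc := continuousOn_of_differentiable hd
  have hconst : IntegrableOn (fun _ : ℝ => (M + 4) ^ 4) (Ioo (0:ℝ) 1) := integrableOn_const (by simp)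
  refine hconst.mono' ?_ ?_
  · exact (continuousOn_id.mul (hc.pow 4)).aestronglyMeasurable measurableSet_Ioo
  refine (ae_restrict_iff' measurableSet_Ioo).2 (Filter.Eventually.of_forall fun r hr => ?_)
  -- With `q = r ^ (1/4)`: `r (M + |log r|)⁴ = (M q + |log r| q)⁴` and `|log r| q < 4`.
  obtain ⟨q, hq⟩ : ∃ q, q = r ^ (1/4 : ℝ) := ⟨_, rfl⟩
  have hq0 : 0 ≤ q := hq ▸ Real.rpow_nonneg hr.1.le _
  have hq1 : q ≤ 1 := hq ▸ Real.rpow_le_one hr.1.le hr.2.le (by norm_num)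
  have hq4 : q ^ 4 = r := by
    rw [hq, ← Real.rpow_natCast, ← Real.rpow_mul hr.1.le]
    norm_num
  have hl := Real.abs_log_mul_self_rpow_lt r (1/4) hr.1 hr.2.le (by norm_num)
  rw [← hq, abs_mul, abs_of_nonneg hq0] at hl
  have hwq : |w r| * q ≤ M + 4 := by
    have h1 := mul_le_mul_of_nonneg_right (hw r hr) hq0
    have h2 : M * q ≤ M := mul_le_of_le_one_right hM hq1
    have h3 : (1:ℝ) / (1/4) = 4 := by norm_num
    linarith
  calc ‖r * (w r) ^ 4‖ = (|w r| * q) ^ 4 := by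
        rw [norm_mul, norm_pow, Real.norm_eq_abs, Real.norm_eq_abs, abs_of_pos hr.1, mul_pow, hq4]
        ring
    _ ≤ (M + 4) ^ 4 := by gcongr

/-- Domination criterion for the mixed and cubic terms of the energy density: each of
`u² v²`, `u² v`, `v³` is bounded by `v² + u⁴ + v⁴`. -/
lemma integrableOn_of_dominated {u v f : ℝ → ℝ} (hf : ContinuousOn f (Ioo 0 1))
    (hv2 : IntegrableOn (fun r => r * (v r) ^ 2) (Ioo 0 1))
    (hu4 : IntegrableOn (fun r => r * (u r) ^ 4) (Ioo 0 1))
    (hv4 : IntegrableOn (fun r => r * (v r) ^ 4) (Ioo 0 1))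
    (hle : ∀ r, |f r| ≤ (v r) ^ 2 + (u r) ^ 4 + (v r) ^ 4) :
    IntegrableOn (fun r => r * f r) (Ioo 0 1) := by
  refine ((hv2.add hu4).add hv4).mono'
    ((continuousOn_id.mul hf).aestronglyMeasurable measurableSet_Ioo) ?_
  refine (ae_restrict_iff' measurableSet_Ioo).2 (Filter.Eventually.of_forall fun r hr => ?_)
  rw [norm_mul, Real.norm_eq_abs, Real.norm_eq_abs, abs_of_pos hr.1]
  have := mul_le_mul_of_nonneg_left (hle r) hr.1.le
  simp only [Pi.add_apply]
  linarith

/-- the truncation identity: replacing `v` by its truncation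
`v̄` (set to `0` where `v > 0`) decreases the energy by the explicit
nonnegative integral, which is strictly positive. -/
theorem truncation_energy_identity
    (B C L : ℝ) (hB : 0 < B) (hC : 0 < C) (hL : 0 < L)
    (u v vbar : ℝ → ℝ)
    (hadm : (u, v) ∈ Sadm B C)
    (hu_nonneg : ∀ r ∈ Icc (0:ℝ) 1, 0 ≤ u r)
    (r₁ r₂ : ℝ) (hr₁ : 0 < r₁) (hr₁₂ : r₁ < r₂) (hr₂ : r₂ < 1)
    (hv₁ : v r₁ = 0) (hv₂ : v r₂ = 0)
    (hv_pos : ∀ r, r₁ < r → r < r₂ → 0 < v r)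
    (hvbar : ∀ r, vbar r = if r₁ < r ∧ r < r₂ then 0 else v r) :
    En B C L u v - En B C L u vbar
      = (∫ r in r₁..r₂,
          r * (deriv v r) ^ 2 / 3
            + (r / L) * (C * (v r) ^ 2 / 9) * (v r - B / (3 * C)) ^ 2
            + r * ((u r) ^ 2 / (6 * L)) * (B * v r + C * (v r) ^ 2)) ∧
      0 < En B C L u v - En B C L u vbar := by
  obtain ⟨hdu, hdv, hiu', hiv', hiu, hiv, -, -⟩ := hadm
  simp only at hdu hdv hiu' hiv' hiu hiv
  have hu4 := integrableOn_mul_pow_four hdu hiu'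
  have hv4 := integrableOn_mul_pow_four hdv hiv'
  have hcu := continuousOn_of_differentiable hdu
  have hcv := continuousOn_of_differentiable hdv
  rw [intervalIntegrable_iff_integrableOn_Ioo_of_le zero_le_one] at hiu' hiv' hiu hiv
  have hu2v2 : IntegrableOn (fun r => r * ((u r) ^ 2 * (v r) ^ 2)) (Ioo 0 1) := by
    refine integrableOn_of_dominated ((hcu.pow 2).mul (hcv.pow 2)) hiv hu4 hv4 fun r => ?_
    rw [abs_of_nonneg (by positivity)]
    nlinarith [sq_nonneg (u r ^ 2 - v r ^ 2), sq_nonneg (u r ^ 2), sq_nonneg (v r ^ 2),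
      sq_nonneg (v r)]
  have hu2v : IntegrableOn (fun r => r * ((u r) ^ 2 * v r)) (Ioo 0 1) := by
    refine integrableOn_of_dominated ((hcu.pow 2).mul hcv) hiv hu4 hv4 fun r => ?_
    rw [abs_le]
    constructor <;>
    nlinarith [sq_nonneg (u r ^ 2 - v r), sq_nonneg (u r ^ 2 + v r), sq_nonneg (u r ^ 2),
      sq_nonneg (v r ^ 2), sq_nonneg (v r)]
  have hv3 : IntegrableOn (fun r => r * (v r) ^ 3) (Ioo 0 1) := by
    refine integrableOn_of_dominated (u := u) (hcv.pow 3) hiv hu4 hv4 fun r => ?_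
    rw [abs_le]
    constructor <;>
    nlinarith [sq_nonneg (v r ^ 2 - v r), sq_nonneg (v r ^ 2 + v r), sq_nonneg (u r ^ 2),
      sq_nonneg (v r ^ 2), sq_nonneg (v r)]
  have hu2 : IntegrableOn (fun r => r * (u r) ^ 2) (Ioo 0 1) := by
    refine hiu.mono' ((continuousOn_id.mul (hcu.pow 2)).aestronglyMeasurable measurableSet_Ioo) ?_
    refine (ae_restrict_iff' measurableSet_Ioo).2 (Filter.Eventually.of_forall fun r hr => ?_)
    rw [Real.norm_eq_abs, abs_of_nonneg (mul_nonneg hr.1.le (sq_nonneg _)), le_div_iff₀ hr.1]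
    have h1 : r * r ≤ 1 := mul_le_one₀ hr.2.le hr.1.le hr.2.le
    nlinarith [mul_le_mul_of_nonneg_right h1 (sq_nonneg (u r))]
  obtain ⟨e, he⟩ : ∃ e : (ℝ → ℝ) → ℝ → ℝ, e = fun v r =>
    ((deriv u r) ^ 2 / 4 + (deriv v r) ^ 2 / 3 + (u r) ^ 2 / r ^ 2
      + (B ^ 2 / (54 * C * L)) * ((u r) ^ 2 / 2 + 2 * (v r) ^ 2 / 3)
      + (C / L) * ((u r) ^ 4 / 16 + (u r) ^ 2 * (v r) ^ 2 / 6 + (v r) ^ 4 / 9)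
      - (B / (3 * L)) * v r * (2 * (v r) ^ 2 / 9 - (u r) ^ 2 / 2)) * r := ⟨_, rfl⟩
  obtain ⟨g, hg⟩ : ∃ g : ℝ → ℝ, g = fun r =>
    r * (deriv v r) ^ 2 / 3
      + (r / L) * (C * (v r) ^ 2 / 9) * (v r - B / (3 * C)) ^ 2
      + r * ((u r) ^ 2 / (6 * L)) * (B * v r + C * (v r) ^ 2) := ⟨_, rfl⟩
  have hE : ∀ v, En B C L u v = ∫ r in Ioo (0:ℝ) 1, e v r := fun v => by
    rw [En, intervalIntegral.integral_of_le zero_le_one, integral_Ioc_eq_integral_Ioo, he]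
  have hfi : IntegrableOn (e v) (Ioo 0 1) := by
    have := ((((((((hiu'.const_mul (1/4)).add (hiv'.const_mul (1/3))).add hiu).add
      (hu2.const_mul (B ^ 2 / (54 * C * L) / 2))).add
      (hiv.const_mul (B ^ 2 / (54 * C * L) * 2 / 3))).add
      (hu4.const_mul (C / L / 16))).add (hu2v2.const_mul (C / L / 6))).add
      (hv4.const_mul (C / L / 9))).add
      ((hv3.const_mul (-(B / (3 * L)) * 2 / 9)).add (hu2v.const_mul (B / (3 * L) / 2)))
    refine IntegrableOn.congr_fun this (fun r hr => ?_) measurableSet_Ioo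
    have hr0 := hr.1.ne'
    simp only [he, Pi.add_apply]
    field_simp
    ring
  have hsub : Ioo r₁ r₂ ⊆ Ioo (0:ℝ) 1 := Ioo_subset_Ioo hr₁.le hr₂.le
  have hgi : IntegrableOn g (Ioo r₁ r₂) := by
    have := (((hiv'.const_mul (1/3)).add
      (hiv.const_mul (B ^ 2 / (81 * C * L)))).add
      ((hu2v2.const_mul (C / L / 6)).add (hv4.const_mul (C / L / 9)))).add
      ((hv3.const_mul (-(B / (3 * L)) * 2 / 9)).add (hu2v.const_mul (B / (3 * L) / 2)))
    refine IntegrableOn.congr_fun (IntegrableOn.mono_set this hsub) (fun r _ => ?_) measurableSet_Ioo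
    simp only [hg, Pi.add_apply]
    field_simp
    ring
  have hdens : e vbar =ᵐ[volume.restrict (Ioo 0 1)]
      fun r => e v r - (Ioo r₁ r₂).indicator g r := by
    refine ae_restrict_of_ae ?_
    filter_upwards [compl_mem_ae_iff.2 (measure_singleton (μ := volume) r₁),
      compl_mem_ae_iff.2 (measure_singleton (μ := volume) r₂)] with r h1 h2
    by_cases hr : r ∈ Ioo r₁ r₂
    · have hev : vbar =ᶠ[nhds r] fun _ => 0 := by
        filter_upwards [isOpen_Ioo.mem_nhds hr] with x hx
        rw [hvbar, if_pos ⟨hx.1, hx.2⟩]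
      rw [indicator_of_mem hr]
      simp only [he, hg]
      rw [hev.deriv_eq, hev.eq_of_nhds, deriv_const]
      field_simp
      ring
    · have hcl : r ∈ (Icc r₁ r₂)ᶜ := fun h =>
        hr ⟨lt_of_le_of_ne h.1 (Ne.symm h1), lt_of_le_of_ne h.2 h2⟩
      have hev : vbar =ᶠ[nhds r] v := by
        filter_upwards [isClosed_Icc.isOpen_compl.mem_nhds hcl] with x hx
        rw [hvbar, if_neg fun h => hx ⟨h.1.le, h.2.le⟩]
      rw [indicator_of_notMem hr, sub_zero]
      simp only [he]
      rw [hev.deriv_eq, hev.eq_of_nhds]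
  have hind : IntegrableOn ((Ioo r₁ r₂).indicator g) (Ioo 0 1) :=
    (hgi.integrable_indicator measurableSet_Ioo).integrableOn
  have hmain : En B C L u v - En B C L u vbar = ∫ r in Ioo r₁ r₂, g r := by
    rw [hE, hE, integral_congr_ae hdens, integral_sub hfi hind, setIntegral_indicator
      measurableSet_Ioo, inter_eq_right.2 hsub]
    ring
  have hpos : 0 < ∫ r in Ioo r₁ r₂, g r := by
    have hterm : ∀ r ∈ Ioo r₁ r₂, (r / L) * (C * (v r) ^ 2 / 9) * (v r - B / (3 * C)) ^ 2 ≤ g r := by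
      intro r hr
      have hr0 : 0 < r := hr₁.trans hr.1
      have hv0 := hv_pos r hr.1 hr.2
      have h1 : 0 ≤ r * (deriv v r) ^ 2 / 3 := by positivity
      have h2 : 0 ≤ r * ((u r) ^ 2 / (6 * L)) * (B * v r + C * (v r) ^ 2) := by positivity
      simp only [hg]
      linarith
    refine (setIntegral_pos_iff_support_of_nonneg_ae ?_ hgi).2 ?_
    · refine (ae_restrict_iff' measurableSet_Ioo).2 (Filter.Eventually.of_forall fun r hr => ?_)
      have hr0 : 0 < r := hr₁.trans hr.1
      exact le_trans (by positivity) (hterm r hr)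
    have hcont : ContinuousAt v r₁ := (hdv r₁ ⟨hr₁, hr₁₂.trans hr₂⟩).continuousAt
    have hsmall : ∀ᶠ r in nhds r₁, v r < B / (3 * C) :=
      hcont.eventually_lt_const (by rw [hv₁]; positivity)
    obtain ⟨δ, hδ, hball⟩ := Metric.eventually_nhds_iff.1 hsmall
    have hlt : r₁ < min (r₁ + δ) r₂ := lt_min (by linarith) hr₁₂
    refine lt_of_lt_of_le (b := volume (Ioo r₁ (min (r₁ + δ) r₂))) ?_ (measure_mono fun r hr => ?_)
    · rw [Real.volume_Ioo]
      exact ENNReal.ofReal_pos.2 (sub_pos.2 hlt)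
    have hr2 : r ∈ Ioo r₁ r₂ := ⟨hr.1, hr.2.trans_le (min_le_right _ _)⟩
    have hrδ := hr.2.trans_le (min_le_left _ _)
    have hvr : v r < B / (3 * C) := hball (by
      rw [Real.dist_eq, abs_of_pos (sub_pos.2 hr.1)]
      linarith)
    have hr0 : 0 < r := hr₁.trans hr.1
    have hv0 := hv_pos r hr2.1 hr2.2
    have hsq : 0 < (v r - B / (3 * C)) ^ 2 := sq_pos_of_neg (by linarith)
    exact ⟨(lt_of_lt_of_le (by positivity) (hterm r hr2)).ne', hr2⟩
  refine ⟨?_, hmain ▸ hpos⟩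
  rw [hmain, intervalIntegral.integral_of_le hr₁₂.le, integral_Ioc_eq_integral_Ioo, hg]
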